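/- arXiv:1807.08423 — 2 statements merged into one kernel-verified Lean document; each statement's English description precedes it below -/
import Mathlib

section
/- Let 0 < 1/n ≪ ε ≤ d ≤ 1 (that is, for all ε, d with 0 < ε ≤ d ≤ 1 there exists n₀ such that the following holds for all n ≥ n₀). Suppose G is an (ε, d)-super-regular bipartite graph with vertex partition (A, B) satisfying |A|, |B| ≤ n. Let a₁, a₂, b₁, b₂ ∈ ℕ be numbers such that a₁, a₂, b₁, b₂ ≥ εn, a₁ + a₂ = |A|, and b₁ + b₂ = |B|. Then there exist a partition A₁, A₂ of A and a partition B₁, B₂ of B such that for all i, j ∈ [2]: |A_i| = a_i, |B_j| = b_j, and the induced bipartite graph G[A_i, B_j] is (ε^{1/2}, d)-super-regular. -/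
open SimpleGraph

namespace ApproxDecomp

/-- The number of (ordered) edges of `G` from `A` to `B`; for disjoint `A`, `B`
this is the number of edges with one endpoint in each. -/
noncomputable def eBetween {V : Type*} (G : SimpleGraph V) (A B : Set V) : ℕ :=
  {p : V × V | p.1 ∈ A ∧ p.2 ∈ B ∧ G.Adj p.1 p.2}.ncard

/-- The number of neighbours of `v` inside `B`. -/
noncomputable def degIn {V : Type*} (G : SimpleGraph V) (v : V) (B : Finset V) : ℕ :=
  ((B : Set V) ∩ G.neighborSet v).ncard

/-- The pair `(A,B)` is `(ε,d)`-regular in `G`. -/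
def IsRegularPair {V : Type*} (G : SimpleGraph V) (A B : Finset V) (ε d : ℝ) : Prop :=
  ∀ A' ⊆ A, ∀ B' ⊆ B, ε * A.card ≤ (A'.card : ℝ) → ε * B.card ≤ (B'.card : ℝ) →
    |(eBetween G ↑A' ↑B' : ℝ) / (A'.card * B'.card) - d| < ε

/-- The pair `(A,B)` is `(ε,d)`-super-regular in `G`. -/
def IsSuperRegularPair {V : Type*} (G : SimpleGraph V) (A B : Finset V) (ε d : ℝ) : Prop :=
  IsRegularPair G A B ε d ∧
  (∀ a ∈ A, (d - ε) * B.card ≤ (degIn G a B : ℝ) ∧ (degIn G a B : ℝ) ≤ (d + ε) * B.card) ∧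
  (∀ b ∈ B, (d - ε) * A.card ≤ (degIn G b A : ℝ) ∧ (degIn G b A : ℝ) ≤ (d + ε) * A.card)

/-- `G` is a bipartite graph with vertex partition `(A, B)`. -/
def IsBipartiteWith {V : Type*} (G : SimpleGraph V) (A B : Finset V) : Prop :=
  Disjoint A B ∧ (∀ v : V, v ∈ A ∨ v ∈ B) ∧
  (∀ u v : V, G.Adj u v → (u ∈ A ∧ v ∈ B) ∨ (u ∈ B ∧ v ∈ A))


lemma mgf_bound (p t : ℝ) (hp0 : 0 ≤ p) (hp1 : p ≤ 1) (ht : |t| ≤ 1) :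
    p * Real.exp (t * (1 - p)) + (1 - p) * Real.exp (-(t * p)) ≤ Real.exp (t ^ 2) := by
  have key : ∀ u : ℝ, |u| ≤ 1 → Real.exp u ≤ 1 + u + u ^ 2 := by
    intro u hu
    have := (abs_le.mp (Real.abs_exp_sub_one_sub_id_le hu)).2
    linarith
  have h1 : |t * (1 - p)| ≤ 1 := by
    rw [abs_mul, abs_of_nonneg (by linarith : (0:ℝ) ≤ 1 - p)]
    exact mul_le_one₀ ht (by linarith) (by linarith)
  have h2 : |-(t * p)| ≤ 1 := by
    rw [abs_neg, abs_mul, abs_of_nonneg hp0]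
    exact mul_le_one₀ ht (by linarith) (by linarith)
  have k1 := mul_le_mul_of_nonneg_left (key _ h1) hp0
  have k2 := mul_le_mul_of_nonneg_left (key _ h2) (by linarith : (0:ℝ) ≤ 1 - p)
  have k3 := Real.add_one_le_exp (t ^ 2)
  have k4 : p * (1 - p) ≤ 1 := by nlinarith
  have k5 : t ^ 2 * (p * (1 - p)) ≤ t ^ 2 * 1 := mul_le_mul_of_nonneg_left k4 (sq_nonneg t)
  nlinarith

/-- Discrepancy of `S` on `X` relative to density `p` in `A`. -/
noncomputable def disc {V : Type*} [DecidableEq V] (p : ℝ) (A S X : Finset V) : ℝ :=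
  ((X ∩ S).card : ℝ) - p * ((X ∩ A).card : ℝ)

lemma exists_disc {V : Type*} [DecidableEq V] (F : Finset (Finset V)) (p l : ℝ)
    (hp0 : 0 ≤ p) (hp1 : p ≤ 1) (hl0 : 0 ≤ l) (hl1 : l ≤ 1) (A : Finset V) :
    ∃ S ⊆ A, ∑ X ∈ F, (Real.exp (l * disc p A S X) + Real.exp (-l * disc p A S X))
      ≤ 2 * F.card * Real.exp (l ^ 2 * A.card) := by
  induction A using Finset.induction_on with
  | empty =>
    refine ⟨∅, by simp, ?_⟩
    simp [disc]
    linarith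
  | insert x A hx ih =>
    obtain ⟨S, hS, hsum⟩ := ih
    have hxS : x ∉ S := fun h => hx (hS h)
    set P : Finset V → ℝ := fun S' =>
      ∑ X ∈ F, (Real.exp (l * disc p (insert x A) S' X) + Real.exp (-l * disc p (insert x A) S' X))
      with hP
    have hmain : p * P (insert x S) + (1 - p) * P S ≤
        Real.exp (l ^ 2) *
          ∑ X ∈ F, (Real.exp (l * disc p A S X) + Real.exp (-l * disc p A S X)) := by
      rw [hP]
      simp only [Finset.mul_sum]
      rw [← Finset.sum_add_distrib]
      apply Finset.sum_le_sum
      intro X _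
      have hl : |l| ≤ 1 := by rw [abs_of_nonneg hl0]; exact hl1
      by_cases hxX : x ∈ X
      · have e1 : disc p (insert x A) (insert x S) X = disc p A S X + (1 - p) := by
          unfold disc
          rw [Finset.inter_insert_of_mem hxX, Finset.inter_insert_of_mem hxX,
            Finset.card_insert_of_notMem (by simp [hxS]),
            Finset.card_insert_of_notMem (by simp [hx])]
          push_cast; ring
        have e2 : disc p (insert x A) S X = disc p A S X - p := by
          unfold disc
          rw [Finset.inter_insert_of_mem hxX,
            Finset.card_insert_of_notMem (by simp [hx])]
          push_cast; ring
        rw [e1, e2]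
        set D := disc p A S X
        have m1 := mul_le_mul_of_nonneg_left (mgf_bound p l hp0 hp1 hl) (Real.exp_nonneg (l * D))
        have m2 := mul_le_mul_of_nonneg_left (mgf_bound p (-l) hp0 hp1 (by rwa [abs_neg]))
          (Real.exp_nonneg (-l * D))
        have a1 : Real.exp (l * (D + (1 - p))) = Real.exp (l * D) * Real.exp (l * (1 - p)) := by
          rw [← Real.exp_add]; ring_nf
        have a2 : Real.exp (-l * (D + (1 - p))) = Real.exp (-l * D) * Real.exp (-l * (1 - p)) := by
          rw [← Real.exp_add]; ring_nf
        have a3 : Real.exp (l * (D - p)) = Real.exp (l * D) * Real.exp (-(l * p)) := by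
          rw [← Real.exp_add]; ring_nf
        have a4 : Real.exp (-l * (D - p)) = Real.exp (-l * D) * Real.exp (-(-l * p)) := by
          rw [← Real.exp_add]; ring_nf
        rw [a1, a2, a3, a4]
        rw [neg_sq] at m2
        linarith
      · have e1 : disc p (insert x A) (insert x S) X = disc p A S X := by
          unfold disc
          rw [Finset.inter_insert_of_notMem hxX, Finset.inter_insert_of_notMem hxX]
        have e2 : disc p (insert x A) S X = disc p A S X := by
          unfold disc
          rw [Finset.inter_insert_of_notMem hxX]
        rw [e1, e2]
        set T := Real.exp (l * disc p A S X) + Real.exp (-l * disc p A S X)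
        have hT : 0 ≤ T := by positivity
        have : 1 ≤ Real.exp (l ^ 2) := Real.one_le_exp (sq_nonneg l)
        nlinarith
    have hfin : Real.exp (l ^ 2) *
          ∑ X ∈ F, (Real.exp (l * disc p A S X) + Real.exp (-l * disc p A S X)) ≤
        2 * F.card * Real.exp (l ^ 2 * (insert x A).card) := by
      rw [Finset.card_insert_of_notMem hx]
      have : Real.exp (l ^ 2 * ((A.card + 1 : ℕ) : ℝ)) =
          Real.exp (l ^ 2) * Real.exp (l ^ 2 * A.card) := by
        rw [← Real.exp_add]; push_cast; ring_nf
      rw [this]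
      have := mul_le_mul_of_nonneg_left hsum (Real.exp_nonneg (l ^ 2))
      linarith
    by_cases hc : P S ≤ 2 * F.card * Real.exp (l ^ 2 * (insert x A).card)
    · exact ⟨S, hS.trans (Finset.subset_insert _ _), hc⟩
    · refine ⟨insert x S, Finset.insert_subset_insert _ hS, ?_⟩
      by_contra hc2
      change ¬ (P (insert x S) ≤ _) at hc2
      push Not at hc hc2
      rcases le_total p (1 / 2) with hp | hp <;> nlinarith

lemma exists_disc_abs {V : Type*} [DecidableEq V] (F : Finset (Finset V)) (p l : ℝ)
    (hp0 : 0 ≤ p) (hp1 : p ≤ 1) (hl0 : 0 < l) (hl1 : l ≤ 1) (A : Finset V) :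
    ∃ S ⊆ A, ∀ X ∈ F, l * |disc p A S X| ≤ Real.log (2 * F.card) + l ^ 2 * A.card := by
  obtain ⟨S, hS, hsum⟩ := exists_disc F p l hp0 hp1 hl0.le hl1 A
  refine ⟨S, hS, fun X hX => ?_⟩
  have hF : (0:ℝ) < 2 * F.card := by
    have := Finset.card_pos.mpr ⟨X, hX⟩
    positivity
  have h1 : Real.exp (l * disc p A S X) + Real.exp (-l * disc p A S X) ≤
      2 * F.card * Real.exp (l ^ 2 * A.card) := by
    refine le_trans ?_ hsum
    exact Finset.single_le_sum
      (f := fun X => Real.exp (l * disc p A S X) + Real.exp (-l * disc p A S X))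
      (fun _ _ => by positivity) hX
  have h2 : Real.exp (l * |disc p A S X|) ≤ 2 * F.card * Real.exp (l ^ 2 * A.card) := by
    refine le_trans ?_ h1
    rcases abs_cases (disc p A S X) with ⟨h, _⟩ | ⟨h, _⟩ <;> rw [h]
    · have := Real.exp_nonneg (-l * disc p A S X); linarith
    · have := Real.exp_nonneg (l * disc p A S X)
      rw [mul_neg, ← neg_mul]; linarith
  have h3 := Real.log_le_log (Real.exp_pos _) h2
  rwa [Real.log_exp, Real.log_mul hF.ne' (Real.exp_pos _).ne', Real.log_exp] at h3

/-- Adjust the size of a subset. -/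
lemma adjust {V : Type*} [DecidableEq V] (A S : Finset V) (hS : S ⊆ A) (a : ℕ) (ha : a ≤ A.card) :
    ∃ S' ⊆ A, S'.card = a ∧ ∀ X : Finset V,
      |((X ∩ S').card : ℝ) - (X ∩ S).card| ≤ |(a : ℝ) - S.card| := by
  rcases le_total a S.card with h | h
  · obtain ⟨S', hS', hc⟩ := Finset.exists_subset_card_eq h
    refine ⟨S', hS'.trans hS, hc, fun X => ?_⟩
    have h1 : (X ∩ S').card ≤ (X ∩ S).card :=
      Finset.card_le_card (Finset.inter_subset_inter_left hS')
    have h2 : (X ∩ S).card ≤ (X ∩ S').card + (S \ S').card := by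
      refine le_trans (Finset.card_le_card ?_) (Finset.card_union_le _ _)
      intro x; simp only [Finset.mem_inter, Finset.mem_union, Finset.mem_sdiff]; tauto
    rw [Finset.card_sdiff_of_subset hS', hc] at h2
    have h3 : (X ∩ S).card + a ≤ (X ∩ S').card + S.card := by omega
    have h1' : ((X ∩ S').card : ℝ) ≤ (X ∩ S).card := by exact_mod_cast h1
    have h3' : ((X ∩ S).card : ℝ) + a ≤ (X ∩ S').card + S.card := by exact_mod_cast h3
    have h' : (a : ℝ) ≤ S.card := by exact_mod_cast h
    rw [abs_of_nonpos (by linarith), abs_of_nonpos (by linarith)]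
    linarith
  · obtain ⟨S', hS', hS'A, hc⟩ := Finset.exists_subsuperset_card_eq hS h ha
    refine ⟨S', hS'A, hc, fun X => ?_⟩
    have h1 : (X ∩ S).card ≤ (X ∩ S').card :=
      Finset.card_le_card (Finset.inter_subset_inter_left hS')
    have h2 : (X ∩ S').card ≤ (X ∩ S).card + (S' \ S).card := by
      refine le_trans (Finset.card_le_card ?_) (Finset.card_union_le _ _)
      intro x; simp only [Finset.mem_inter, Finset.mem_union, Finset.mem_sdiff]; tauto
    rw [Finset.card_sdiff_of_subset hS', hc] at h2
    have h3 : (X ∩ S').card + S.card ≤ (X ∩ S).card + a := by omega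
    have h1' : ((X ∩ S).card : ℝ) ≤ (X ∩ S').card := by exact_mod_cast h1
    have h3' : ((X ∩ S').card : ℝ) + S.card ≤ (X ∩ S).card + a := by exact_mod_cast h3
    have h' : (S.card : ℝ) ≤ a := by exact_mod_cast h
    rw [abs_of_nonneg (by linarith), abs_of_nonneg (by linarith)]
    linarith

lemma log_small (c : ℝ) (hc : 0 < c) (M : ℕ) :
    ∃ n₀ : ℕ, ∀ n : ℕ, n₀ ≤ n → Real.log (2 * (n + M + 1 : ℝ)) ≤ c * n := by
  have h1 : Filter.Tendsto (fun n : ℕ => 2 * ((n : ℝ) + M + 1)) Filter.atTop Filter.atTop := by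
    apply Filter.Tendsto.const_mul_atTop (by norm_num)
    apply Filter.tendsto_atTop_add_const_right
    apply Filter.tendsto_atTop_add_const_right
    exact tendsto_natCast_atTop_atTop
  have h2 := (Real.isLittleO_log_id_atTop.comp_tendsto h1).def (c := c / 4) (by positivity)
  obtain ⟨N, hN⟩ := Filter.eventually_atTop.mp h2
  refine ⟨max N (M + 1), fun n hn => ?_⟩
  have h3 := hN n (le_trans (le_max_left _ _) hn)
  simp only [Function.comp, id, Real.norm_eq_abs] at h3
  have h4 : ((M + 1 : ℕ) : ℝ) ≤ n := by exact_mod_cast le_trans (le_max_right _ _) hn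
  push_cast at h4
  have h5 : (0:ℝ) ≤ 2 * ((n : ℝ) + M + 1) := by positivity
  rw [abs_of_nonneg h5] at h3
  have := le_abs_self (Real.log (2 * ((n : ℝ) + M + 1)))
  nlinarith

/-- A subset of prescribed size which is nearly proportional on each member of a small family. -/
lemma exists_split (δ : ℝ) (hδ : 0 < δ) (M : ℕ) :
    ∃ n₀ : ℕ, ∀ n : ℕ, n₀ ≤ n → ∀ (V : Type) [DecidableEq V] (A : Finset V)
      (F : Finset (Finset V)), A.card ≤ n → 0 < A.card → F.card ≤ n + M → ∀ a : ℕ, a ≤ A.card →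
      ∃ S ⊆ A, S.card = a ∧ ∀ X ∈ F, X ⊆ A →
        |((X ∩ S).card : ℝ) - a / A.card * X.card| ≤ δ * n := by
  set l := min 1 (δ / 4) with hl
  have hl0 : 0 < l := by positivity
  have hl1 : l ≤ 1 := min_le_left _ _
  have hl2 : l ≤ δ / 4 := min_le_right _ _
  obtain ⟨n₀, hn₀⟩ := log_small (l * (δ / 4)) (by positivity) M
  refine ⟨n₀, fun n hn V _ A F hA hA0 hF a ha => ?_⟩
  have hA0' : (0:ℝ) < A.card := by exact_mod_cast hA0
  have hA' : (A.card : ℝ) ≤ n := by exact_mod_cast hA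
  have ha' : (a : ℝ) ≤ A.card := by exact_mod_cast ha
  set p : ℝ := a / A.card with hp
  obtain ⟨S, hS, hd⟩ := exists_disc_abs (insert A F) p l (by positivity)
    ((div_le_one hA0').mpr ha') hl0 hl1 A
  have hb : ∀ X ∈ insert A F, |disc p A S X| ≤ δ / 2 * n := by
    intro X hX
    have h1 := hd X hX
    have h2 : Real.log (2 * ((insert A F).card : ℝ)) ≤ l * (δ / 4) * n := by
      refine le_trans (Real.log_le_log ?_ ?_) (hn₀ n hn)
      · have := Finset.card_pos.mpr ⟨X, hX⟩
        positivity
      · have h3 : (insert A F).card ≤ n + M + 1 := (Finset.card_insert_le _ _).trans (by omega)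
        have : ((insert A F).card : ℝ) ≤ n + M + 1 := by exact_mod_cast h3
        linarith
    have h3 : l ^ 2 * A.card ≤ l * (δ / 4) * n := by
      rw [sq]
      gcongr
    have h4 : l * |disc p A S X| ≤ l * (δ / 2 * n) := by linarith
    exact le_of_mul_le_mul_left h4 hl0
  obtain ⟨S', hS'A, hc, hS'⟩ := adjust A S hS a ha
  refine ⟨S', hS'A, hc, fun X hX hXA => ?_⟩
  have h1 := hb A (Finset.mem_insert_self _ _)
  have h2 := hb X (Finset.mem_insert_of_mem hX)
  have h3 := hS' X
  unfold disc at h1 h2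
  rw [Finset.inter_eq_left.mpr hXA] at h2
  rw [Finset.inter_eq_right.mpr hS, Finset.inter_self, hp, div_mul_cancel₀ _ hA0'.ne',
    abs_sub_comm] at h1
  have h4 := abs_sub_le ((X ∩ S').card : ℝ) (X ∩ S).card (p * X.card)
  linarith

/-- Weak regularity decomposition with a fixed number of steps. -/
lemma weak_reg {V : Type*} [DecidableEq V] (A B : Finset V) (f : V → V → ℝ)
    (hf : ∀ x ∈ A, ∀ y ∈ B, |f x y| ≤ 1) (δ : ℝ) (hδ : 0 < δ) (m : ℕ) :
    ∃ (P Q : Fin m → Finset V) (s : Fin m → ℝ), (∀ i, |s i| ≤ δ) ∧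
      ((∀ X ⊆ A, ∀ Y ⊆ B, |∑ x ∈ X, ∑ y ∈ Y, (f x y - ∑ i, if x ∈ P i ∧ y ∈ Q i then s i else 0)|
          ≤ δ * (A.card * B.card)) ∨
        ∑ x ∈ A, ∑ y ∈ B, (f x y - ∑ i, if x ∈ P i ∧ y ∈ Q i then s i else 0) ^ 2 ≤
          (1 - m * δ ^ 2) * (A.card * B.card)) := by
  induction m with
  | zero =>
    refine ⟨fun _ => ∅, fun _ => ∅, fun _ => 0, fun i => i.elim0, Or.inr ?_⟩
    simp only [Finset.univ_eq_empty, Finset.sum_empty, sub_zero]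
    calc ∑ x ∈ A, ∑ y ∈ B, f x y ^ 2 ≤ ∑ x ∈ A, ∑ y ∈ B, (1:ℝ) := by
          refine Finset.sum_le_sum fun x hx => Finset.sum_le_sum fun y hy => ?_
          rw [← sq_abs]
          exact pow_le_one₀ (abs_nonneg _) (hf x hx y hy)
      _ = _ := by simp
  | succ m ih =>
    obtain ⟨P, Q, s, hs, h⟩ := ih
    by_cases hg : ∀ X ⊆ A, ∀ Y ⊆ B,
        |∑ x ∈ X, ∑ y ∈ Y, (f x y - ∑ i, if x ∈ P i ∧ y ∈ Q i then s i else 0)|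
          ≤ δ * (A.card * B.card)
    · refine ⟨Fin.cons ∅ P, Fin.cons ∅ Q, Fin.cons 0 s, ?_, Or.inl ?_⟩
      · intro i
        refine Fin.cases ?_ (fun j => ?_) i
        · simp [hδ.le]
        · simpa using hs j
      · simpa [Fin.sum_univ_succ] using hg
    · have h2 := h.resolve_left hg
      push Not at hg
      obtain ⟨X, hX, Y, hY, hXY⟩ := hg
      set r : V → V → ℝ := fun x y => f x y - ∑ i, if x ∈ P i ∧ y ∈ Q i then s i else 0 with hr
      set R := ∑ x ∈ X, ∑ y ∈ Y, r x y with hR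
      obtain ⟨c, hc1, hc2⟩ : ∃ c : ℝ, |c| = δ ∧ c * R = δ * |R| := by
        rcases abs_cases R with ⟨h, _⟩ | ⟨h, _⟩
        · exact ⟨δ, abs_of_pos hδ, by rw [h]⟩
        · exact ⟨-δ, by rw [abs_neg, abs_of_pos hδ], by rw [h]; ring⟩
      refine ⟨Fin.cons X P, Fin.cons Y Q, Fin.cons c s, ?_, Or.inr ?_⟩
      · intro i
        refine Fin.cases ?_ (fun j => ?_) i
        · simp [hc1]
        · simpa using hs j
      · have e : ∀ x y, (f x y - ∑ i : Fin (m + 1), if x ∈ (Fin.cons X P : Fin (m+1) → Finset V) i ∧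
            y ∈ (Fin.cons Y Q : Fin (m+1) → Finset V) i
            then (Fin.cons c s : Fin (m+1) → ℝ) i else 0) ^ 2 =
            r x y ^ 2 + (if x ∈ X then (if y ∈ Y then (c ^ 2 - 2 * c * r x y) else 0) else 0) := by
          intro x y
          simp only [Fin.sum_univ_succ, Fin.cons_zero, Fin.cons_succ, hr]
          by_cases hx : x ∈ X <;> by_cases hy : y ∈ Y <;> simp [hx, hy] <;> ring
        simp only [e, Finset.sum_add_distrib]
        have e2 : ∑ x ∈ A, ∑ y ∈ B,
            (if x ∈ X then (if y ∈ Y then (c ^ 2 - 2 * c * r x y) else 0) else 0)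
            = c ^ 2 * (X.card * Y.card) - 2 * (c * R) := by
          have e3 : ∀ x ∈ A, ∑ y ∈ B,
            (if x ∈ X then (if y ∈ Y then (c ^ 2 - 2 * c * r x y) else 0) else 0) =
              if x ∈ X then ∑ y ∈ Y, (c ^ 2 - 2 * c * r x y) else 0 := by
            intro x _
            split_ifs
            · rw [← Finset.sum_filter, Finset.filter_mem_eq_inter, Finset.inter_eq_right.mpr hY]
            · simp
          rw [Finset.sum_congr rfl e3, ← Finset.sum_filter, Finset.filter_mem_eq_inter,
            Finset.inter_eq_right.mpr hX]
          simp only [Finset.sum_sub_distrib, Finset.sum_const, nsmul_eq_mul, hR, Finset.mul_sum]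
          congr 1
          · ring
          · refine Finset.sum_congr rfl fun x _ => Finset.sum_congr rfl fun y _ => by ring
        rw [e2, hc2, ← sq_abs c, hc1]
        have h3 : (X.card : ℝ) * Y.card ≤ A.card * B.card := by
          have := Finset.card_le_card hX
          have := Finset.card_le_card hY
          gcongr
        have h4 : δ ^ 2 * ((X.card : ℝ) * Y.card) ≤ δ ^ 2 * (A.card * B.card) := by gcongr
        have h5 : δ * (δ * (A.card * B.card)) ≤ δ * |R| := by gcongr
        push_cast
        nlinarith

lemma weak_reg' {V : Type*} [DecidableEq V] (A B : Finset V) (hA : 0 < A.card) (hB : 0 < B.card)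
    (f : V → V → ℝ)
    (hf : ∀ x ∈ A, ∀ y ∈ B, |f x y| ≤ 1) (δ : ℝ) (hδ : 0 < δ) (m : ℕ) (hm : 1 < m * δ ^ 2) :
    ∃ (P Q : Fin m → Finset V) (s : Fin m → ℝ), (∀ i, |s i| ≤ δ) ∧
      (∀ X ⊆ A, ∀ Y ⊆ B, |∑ x ∈ X, ∑ y ∈ Y, (f x y - ∑ i, if x ∈ P i ∧ y ∈ Q i then s i else 0)|
          ≤ δ * (A.card * B.card)) := by
  obtain ⟨P, Q, s, hs, h⟩ := weak_reg A B f hf δ hδ m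
  refine ⟨P, Q, s, hs, h.resolve_right fun h => ?_⟩
  have h1 : (0:ℝ) ≤ ∑ x ∈ A, ∑ y ∈ B, (f x y - ∑ i, if x ∈ P i ∧ y ∈ Q i then s i else 0) ^ 2 :=
    Finset.sum_nonneg fun _ _ => Finset.sum_nonneg fun _ _ => sq_nonneg _
  have h2 : (0:ℝ) < A.card * B.card := by positivity
  nlinarith

/-- Lifting a subset of the sample `S` to a subset of `A` with the same colour profile. -/
lemma lift_set {V C : Type*} [DecidableEq V] [DecidableEq C] [Fintype C]
    (A S X : Finset V) (hS : S ⊆ A) (hX : X ⊆ S) (hS0 : 0 < S.card) (φ : V → C) (η : ℝ) (hη : 0 ≤ η)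
    (h : ∀ c, ((A.filter (φ · = c) ∩ S).card : ℝ) ≤
      S.card / A.card * (A.filter (φ · = c)).card + η * S.card) :
    ∃ X' ⊆ A, ∀ c, |((X'.filter (φ · = c)).card : ℝ) / A.card
      - (X.filter (φ · = c)).card / S.card| ≤ η + 1 / A.card := by
  have hS0' : (0:ℝ) < S.card := by exact_mod_cast hS0
  have hA0' : (0:ℝ) < A.card := by exact_mod_cast hS0.trans_le (Finset.card_le_card hS)
  set u : C → ℝ := fun c => (X.filter (φ · = c)).card / S.card * A.card with hu
  have hex : ∀ c, ∃ Z ⊆ A.filter (φ · = c),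
      Z.card = min ⌊u c⌋₊ (A.filter (φ · = c)).card := fun c =>
    Finset.exists_subset_card_eq (min_le_right _ _)
  choose Z hZ hZc using hex
  refine ⟨Finset.univ.biUnion Z, ?_, fun c => ?_⟩
  · intro x hx
    obtain ⟨c, _, hc⟩ := Finset.mem_biUnion.mp hx
    exact (Finset.mem_filter.mp (hZ c hc)).1
  · have e : (Finset.univ.biUnion Z).filter (φ · = c) = Z c := by
      ext x
      simp only [Finset.mem_filter, Finset.mem_biUnion, Finset.mem_univ, true_and]
      constructor
      · rintro ⟨⟨c', hc'⟩, rfl⟩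
        have := (Finset.mem_filter.mp (hZ c' hc')).2
        rwa [this]
      · intro hx
        exact ⟨⟨c, hx⟩, (Finset.mem_filter.mp (hZ c hx)).2⟩
    rw [e]
    have hle : (X.filter (φ · = c)).card ≤ (A.filter (φ · = c) ∩ S).card := by
      apply Finset.card_le_card
      intro x hx
      rw [Finset.mem_filter] at hx
      rw [Finset.mem_inter, Finset.mem_filter]
      exact ⟨⟨hS (hX hx.1), hx.2⟩, hX hx.1⟩
    have hle' : ((X.filter (φ · = c)).card : ℝ) ≤ (A.filter (φ · = c) ∩ S).card := by
      exact_mod_cast hle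
    have hub : u c ≤ (A.filter (φ · = c)).card + η * A.card := by
      have h1 := hle'.trans (h c)
      calc u c ≤ (S.card / A.card * (A.filter (φ · = c)).card + η * S.card) / S.card * A.card := by
            simp only [hu]; gcongr
        _ = _ := by field_simp
    have hu0 : 0 ≤ u c := by positivity
    have key : |((Z c).card : ℝ) - u c| ≤ η * A.card + 1 := by
      have hηA : 0 ≤ η * A.card := by positivity
      have f1 := Nat.floor_le hu0
      have f2 := Nat.lt_floor_add_one (u c)
      rw [hZc]
      rcases le_total ⌊u c⌋₊ (A.filter (φ · = c)).card with h' | h'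
      · rw [min_eq_left h', abs_le]; constructor <;> linarith
      · rw [min_eq_right h']
        have : ((A.filter (φ · = c)).card : ℝ) ≤ ⌊u c⌋₊ := by exact_mod_cast h'
        rw [abs_le]; constructor <;> linarith
    have e2 : ((Z c).card : ℝ) / A.card - (X.filter (φ · = c)).card / S.card =
        ((Z c).card - u c) / A.card := by
      simp only [hu]; field_simp
    rw [e2, abs_div, abs_of_pos hA0', div_le_iff₀ hA0']
    calc _ ≤ η * A.card + 1 := key
      _ = _ := by field_simp

lemma card_filter_color {V C : Type*} [DecidableEq V] [DecidableEq C] [Fintype C]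
    (X : Finset V) (φ : V → C) (p : C → Prop) [DecidablePred p] :
    (X.filter (fun x => p (φ x))).card =
      ∑ c ∈ Finset.univ.filter p, (X.filter (φ · = c)).card := by
  rw [Finset.card_eq_sum_card_fiberwise (f := φ) (t := Finset.univ.filter p)]
  · refine Finset.sum_congr rfl fun c hc => ?_
    congr 1
    ext x
    simp only [Finset.mem_filter, Finset.mem_univ, true_and] at hc ⊢
    constructor
    · rintro ⟨⟨a, b⟩, c⟩; exact ⟨a, c⟩
    · rintro ⟨a, rfl⟩; exact ⟨⟨a, hc⟩, rfl⟩
  · intro x hx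
    simpa using (Finset.mem_filter.mp hx).2

lemma lift_color {V C : Type*} [DecidableEq V] [DecidableEq C] [Fintype C]
    (X X' : Finset V) (φ : V → C) (p : C → Prop) [DecidablePred p] (a s θ : ℝ)
    (hθ : 0 ≤ θ)
    (h : ∀ c, |((X'.filter (φ · = c)).card : ℝ) / a - (X.filter (φ · = c)).card / s| ≤ θ) :
    |((X'.filter (fun x => p (φ x))).card : ℝ) / a - (X.filter (fun x => p (φ x))).card / s|
      ≤ Fintype.card C * θ := by
  rw [card_filter_color, card_filter_color]
  push_cast
  rw [Finset.sum_div, Finset.sum_div, ← Finset.sum_sub_distrib]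
  refine (Finset.abs_sum_le_sum_abs _ _).trans ((Finset.sum_le_sum fun c _ => h c).trans ?_)
  rw [Finset.sum_const, nsmul_eq_mul]
  gcongr
  exact Finset.card_le_univ _

lemma eBetween_eq {V : Type*} (G : SimpleGraph V) [DecidableRel G.Adj] (X Y : Finset V) :
    (eBetween G ↑X ↑Y : ℝ) = ∑ x ∈ X, ∑ y ∈ Y, if G.Adj x y then (1:ℝ) else 0 := by
  have h : {p : V × V | p.1 ∈ (X : Set V) ∧ p.2 ∈ (Y : Set V) ∧ G.Adj p.1 p.2} =
      (((X ×ˢ Y).filter fun p => G.Adj p.1 p.2 : Finset (V × V)) : Set (V × V)) := by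
    ext p
    simp [and_assoc]
  unfold eBetween
  rw [h, Set.ncard_coe_finset, ← Finset.sum_product', Finset.card_filter]
  push_cast
  rfl

lemma degIn_eq {V : Type*} (G : SimpleGraph V) [DecidableRel G.Adj] (v : V) (B : Finset V) :
    degIn G v B = (B.filter (G.Adj v)).card := by
  have h : (B : Set V) ∩ G.neighborSet v = ((B.filter (G.Adj v) : Finset V) : Set V) := by
    ext p
    simp
  unfold degIn
  rw [h, Set.ncard_coe_finset]

lemma sum_struct {V : Type*} [DecidableEq V] {m : ℕ} (P Q : Fin m → Finset V) (s : Fin m → ℝ)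
    (X Y : Finset V) :
    ∑ x ∈ X, ∑ y ∈ Y, (∑ i, if x ∈ P i ∧ y ∈ Q i then s i else 0) =
      ∑ i, s i * (((X.filter (· ∈ P i)).card : ℝ) * (Y.filter (· ∈ Q i)).card) := by
  have h1 : ∀ x ∈ X, ∑ y ∈ Y, (∑ i, if x ∈ P i ∧ y ∈ Q i then s i else 0) =
      ∑ i, ∑ y ∈ Y, if x ∈ P i ∧ y ∈ Q i then s i else 0 := fun x _ => Finset.sum_comm
  rw [Finset.sum_congr rfl h1, Finset.sum_comm]
  refine Finset.sum_congr rfl fun i _ => ?_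
  rw [Finset.card_filter, Finset.card_filter]
  push_cast
  rw [Finset.sum_mul_sum, Finset.mul_sum]
  refine Finset.sum_congr rfl fun x _ => ?_
  rw [Finset.mul_sum]
  refine Finset.sum_congr rfl fun y _ => ?_
  by_cases hx : x ∈ P i <;> by_cases hy : y ∈ Q i <;> simp [hx, hy]

lemma mul_diff (a b c d t : ℝ) (hb0 : 0 ≤ b) (hb1 : b ≤ 1)
    (hc0 : 0 ≤ c) (hc1 : c ≤ 1) (h1 : |a - c| ≤ t) (h2 : |b - d| ≤ t) :
    |a * b - c * d| ≤ 2 * t := by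
  have e : a * b - c * d = (a - c) * b + c * (b - d) := by ring
  rw [e]
  refine (abs_add_le _ _).trans ?_
  rw [abs_mul, abs_mul, abs_of_nonneg hb0, abs_of_nonneg hc0]
  have : 0 ≤ |a - c| := abs_nonneg _
  have : 0 ≤ |b - d| := abs_nonneg _
  nlinarith

lemma ratio_bounds {V : Type*} (X S : Finset V) (h : X ⊆ S) :
    0 ≤ (X.card : ℝ) / S.card ∧ (X.card : ℝ) / S.card ≤ 1 := by
  have : (X.card : ℝ) ≤ S.card := by exact_mod_cast Finset.card_le_card h
  exact ⟨by positivity, div_le_one_of_le₀ this (by positivity)⟩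

/-- Transfer of the deviation from the whole pair to the sampled pair. -/
lemma dev_transfer {V : Type*} [DecidableEq V] {m : ℕ} (P Q : Fin m → Finset V) (s : Fin m → ℝ)
    (f : V → V → ℝ) (A B S T X Y X' Y' : Finset V) (δ ε τ e : ℝ) (hδ : 0 < δ) (hε : 0 < ε)
    (hS0 : 0 < S.card) (hT0 : 0 < T.card)
    (hS : S ⊆ A) (hT : T ⊆ B) (hX : X ⊆ S) (hY : Y ⊆ T) (hX' : X' ⊆ A) (hY' : Y' ⊆ B)
    (hSA : ε * A.card ≤ S.card) (hTB : ε * B.card ≤ T.card)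
    (hs : ∀ i, |s i| ≤ δ)
    (hcut : ∀ X ⊆ A, ∀ Y ⊆ B,
      |∑ x ∈ X, ∑ y ∈ Y, (f x y - ∑ i, if x ∈ P i ∧ y ∈ Q i then s i else 0)|
          ≤ δ * (A.card * B.card))
    (hXX : ∀ i, |((X'.filter (· ∈ P i)).card : ℝ) / A.card
      - (X.filter (· ∈ P i)).card / S.card| ≤ τ)
    (hYY : ∀ i, |((Y'.filter (· ∈ Q i)).card : ℝ) / B.card
      - (Y.filter (· ∈ Q i)).card / T.card| ≤ τ)
    (hreg : |∑ x ∈ X', ∑ y ∈ Y', f x y| ≤ e * (A.card * B.card)) :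
    |∑ x ∈ X, ∑ y ∈ Y, f x y| ≤ (e + δ + δ / ε ^ 2 + m * (δ * (2 * τ))) * (S.card * T.card) := by
  have hS0' : (0:ℝ) < S.card := by exact_mod_cast hS0
  have hT0' : (0:ℝ) < T.card := by exact_mod_cast hT0
  have hA0' : (0:ℝ) < A.card := by exact_mod_cast hS0.trans_le (Finset.card_le_card hS)
  have hB0' : (0:ℝ) < B.card := by exact_mod_cast hT0.trans_le (Finset.card_le_card hT)
  have c1 := hcut X (hX.trans hS) Y (hY.trans hT)
  have c2 := hcut X' hX' Y' hY'
  simp only [Finset.sum_sub_distrib] at c1 c2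
  rw [sum_struct] at c1 c2
  set F := ∑ x ∈ X, ∑ y ∈ Y, f x y
  set F' := ∑ x ∈ X', ∑ y ∈ Y', f x y
  set g := ∑ i, s i * (((X.filter (· ∈ P i)).card : ℝ) * (Y.filter (· ∈ Q i)).card) with hg
  set g' := ∑ i, s i * (((X'.filter (· ∈ P i)).card : ℝ) * (Y'.filter (· ∈ Q i)).card) with hg'
  have hgg : |g' / (A.card * B.card) - g / (S.card * T.card)| ≤ m * (δ * (2 * τ)) := by
    rw [hg, hg', Finset.sum_div, Finset.sum_div, ← Finset.sum_sub_distrib]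
    refine (Finset.abs_sum_le_sum_abs _ _).trans ?_
    refine (Finset.sum_le_sum (g := fun _ => δ * (2 * τ)) fun i _ => ?_).trans (by simp)
    have r1 := ratio_bounds (Y'.filter (· ∈ Q i)) B ((Finset.filter_subset _ _).trans hY')
    have r2 := ratio_bounds (X.filter (· ∈ P i)) S ((Finset.filter_subset _ _).trans hX)
    have := mul_diff _ _ _ _ τ r1.1 r1.2 r2.1 r2.2 (hXX i) (hYY i)
    rw [mul_div_assoc (s i), mul_div_assoc (s i), ← mul_sub, abs_mul, mul_div_mul_comm, mul_div_mul_comm]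
    exact mul_le_mul (hs i) this (abs_nonneg _) hδ.le
  have hST : (0:ℝ) < S.card * T.card := by positivity
  have hAB : (0:ℝ) < A.card * B.card := by positivity
  have h1 : |F / (S.card * T.card) - g / (S.card * T.card)| ≤ δ / ε ^ 2 := by
    rw [← sub_div, abs_div, abs_of_pos hST, div_le_iff₀ hST]
    refine c1.trans ?_
    have : ε * A.card * (ε * B.card) ≤ S.card * T.card := by gcongr
    calc δ * (A.card * B.card) = δ / ε ^ 2 * (ε * A.card * (ε * B.card)) := by field_simp
      _ ≤ _ := by gcongr
  have h2 : |F' / (A.card * B.card) - g' / (A.card * B.card)| ≤ δ := by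
    rw [← sub_div, abs_div, abs_of_pos hAB, div_le_iff₀ hAB]
    exact c2
  have h3 : |F' / (A.card * B.card)| ≤ e := by
    rw [abs_div, abs_of_pos hAB, div_le_iff₀ hAB]
    exact hreg
  have h4 : |F / (S.card * T.card)| ≤ e + δ + δ / ε ^ 2 + m * (δ * (2 * τ)) := by
    rw [abs_le] at *
    constructor <;> linarith
  rwa [abs_div, abs_of_pos hST, div_le_iff₀ hST] at h4

set_option maxHeartbeats 1000000 in
/-- The main lemma for one sampled pair. -/
lemma pair_lemma {V : Type*} [DecidableEq V] (G : SimpleGraph V) [DecidableRel G.Adj]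
    {m : ℕ} (P Q : Fin m → Finset V) (s : Fin m → ℝ)
    (A B S T : Finset V) (δ ε d τ η κ : ℝ) (hδ : 0 < δ) (hε : 0 < ε) (hε1 : ε < 1)
    (hη : 0 ≤ η)
    (hκ : κ = (Real.sqrt ε - ε) * ε)
    (hS0 : 0 < S.card) (hT0 : 0 < T.card)
    (hS : S ⊆ A) (hT : T ⊆ B)
    (hSA : ε * A.card ≤ S.card) (hTB : ε * B.card ≤ T.card)
    (hs : ∀ i, |s i| ≤ δ)
    (hcut : ∀ X ⊆ A, ∀ Y ⊆ B,
      |∑ x ∈ X, ∑ y ∈ Y, (((if G.Adj x y then (1:ℝ) else 0) - d)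
        - ∑ i, if x ∈ P i ∧ y ∈ Q i then s i else 0)| ≤ δ * (A.card * B.card))
    (hδκ : δ + δ / ε ^ 2 ≤ κ / 4) (hτκ : m * (δ * (2 * τ)) + 2 * τ ≤ κ / 4) (hτ0 : 0 ≤ τ)
    (hητ : 2 ^ m * (η + 1 / A.card) ≤ τ) (hητ' : 2 ^ m * (η + 1 / B.card) ≤ τ)
    (hηε : η ≤ Real.sqrt ε - ε)
    (hSr : ∀ c : Finset (Fin m),
      |((A.filter (fun x => Finset.univ.filter (x ∈ P ·) = c) ∩ S).card : ℝ) -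
      S.card / A.card * (A.filter (fun x => Finset.univ.filter (x ∈ P ·) = c)).card| ≤ η * S.card)
    (hTr : ∀ c : Finset (Fin m),
      |((B.filter (fun x => Finset.univ.filter (x ∈ Q ·) = c) ∩ T).card : ℝ) -
      T.card / B.card * (B.filter (fun x => Finset.univ.filter (x ∈ Q ·) = c)).card| ≤ η * T.card)
    (hSd : ∀ b ∈ B, |((A.filter (G.Adj b) ∩ S).card : ℝ) -
      S.card / A.card * (A.filter (G.Adj b)).card| ≤ η * S.card)
    (hTd : ∀ a ∈ A, |((B.filter (G.Adj a) ∩ T).card : ℝ) -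
      T.card / B.card * (B.filter (G.Adj a)).card| ≤ η * T.card)
    (hG : IsSuperRegularPair G A B ε d) :
    IsSuperRegularPair G S T (Real.sqrt ε) d := by
  have hS0' : (0:ℝ) < S.card := by exact_mod_cast hS0
  have hT0' : (0:ℝ) < T.card := by exact_mod_cast hT0
  have hA0' : (0:ℝ) < A.card := by exact_mod_cast hS0.trans_le (Finset.card_le_card hS)
  have hB0' : (0:ℝ) < B.card := by exact_mod_cast hT0.trans_le (Finset.card_le_card hT)
  have hsq : Real.sqrt ε * Real.sqrt ε = ε := Real.mul_self_sqrt hε.le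
  have hsq0 : 0 < Real.sqrt ε := Real.sqrt_pos.mpr hε
  have hgap : 0 < Real.sqrt ε - ε := by
    have : Real.sqrt ε < 1 := by rw [Real.sqrt_lt' one_pos]; simpa using hε1
    nlinarith
  have hκ0 : 0 < κ := by rw [hκ]; positivity
  have hκ1 : κ ≤ Real.sqrt ε - ε := by rw [hκ]; nlinarith
  have hτ1 : τ ≤ κ / 4 := by
    have : 0 ≤ m * (δ * (2 * τ)) := by positivity
    linarith
  obtain ⟨hreg, hdA, hdB⟩ := hG
  have degs : ∀ (A S : Finset V) (v : V), 0 < (A.card : ℝ) → 0 < (S.card : ℝ) → S ⊆ A →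
      |((A.filter (G.Adj v) ∩ S).card : ℝ) -
        S.card / A.card * (A.filter (G.Adj v)).card| ≤ η * S.card →
      ((d - ε) * A.card ≤ (degIn G v A : ℝ) ∧ (degIn G v A : ℝ) ≤ (d + ε) * A.card) →
      ((d - Real.sqrt ε) * S.card ≤ (degIn G v S : ℝ) ∧
        (degIn G v S : ℝ) ≤ (d + Real.sqrt ε) * S.card) := by
    intro A S v hA0 hS0 hS h1 h2
    rw [degIn_eq] at h2 ⊢
    have e : A.filter (G.Adj v) ∩ S = S.filter (G.Adj v) := by
      ext x
      simp only [Finset.mem_inter, Finset.mem_filter]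
      constructor
      · rintro ⟨⟨_, b⟩, c⟩; exact ⟨c, b⟩
      · rintro ⟨a, b⟩; exact ⟨⟨hS a, b⟩, a⟩
    rw [e, abs_le] at h1
    have k1 : (d - ε) * S.card ≤ S.card / A.card * (A.filter (G.Adj v)).card := by
      calc (d - ε) * S.card = S.card / A.card * ((d - ε) * A.card) := by field_simp
        _ ≤ _ := mul_le_mul_of_nonneg_left h2.1 (by positivity)
    have k2 : S.card / A.card * (A.filter (G.Adj v)).card ≤ (d + ε) * S.card := by
      calc _ ≤ S.card / A.card * ((d + ε) * A.card) :=
            mul_le_mul_of_nonneg_left h2.2 (by positivity)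
        _ = _ := by field_simp
    have k3 : η * S.card ≤ (Real.sqrt ε - ε) * S.card := by gcongr
    constructor <;> linarith
  refine ⟨?_, fun a ha => degs B T a hB0' hT0' hT (hTd a (hS ha)) (hdA a (hS ha)),
    fun b hb => degs A S b hA0' hS0' hS (hSd b (hT hb)) (hdB b (hT hb))⟩
  intro X hX Y hY hXc hYc
  obtain ⟨X', hX', hXX⟩ := lift_set A S X hS hX hS0
    (fun x => Finset.univ.filter (x ∈ P ·)) η hη (fun c => by linarith [(abs_le.mp (hSr c)).2])
  obtain ⟨Y', hY', hYY⟩ := lift_set B T Y hT hY hT0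
    (fun x => Finset.univ.filter (x ∈ Q ·)) η hη (fun c => by linarith [(abs_le.mp (hTr c)).2])
  have cardC : ((Fintype.card (Finset (Fin m)) : ℕ) : ℝ) = 2 ^ m := by simp
  have tX : |(X'.card : ℝ) / A.card - X.card / S.card| ≤ τ := by
    have := lift_color X X' _ (fun _ => True) _ _ _ (by positivity) hXX
    rw [cardC] at this
    simpa using this.trans hητ
  have tY : |(Y'.card : ℝ) / B.card - Y.card / T.card| ≤ τ := by
    have := lift_color Y Y' _ (fun _ => True) _ _ _ (by positivity) hYY
    rw [cardC] at this
    simpa using this.trans hητ'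
  have tXi : ∀ i, |((X'.filter (· ∈ P i)).card : ℝ) / A.card
      - (X.filter (· ∈ P i)).card / S.card| ≤ τ := by
    intro i
    have := lift_color X X' _ (fun c => i ∈ c) _ _ _ (by positivity) hXX
    rw [cardC] at this
    simpa using this.trans hητ
  have tYi : ∀ i, |((Y'.filter (· ∈ Q i)).card : ℝ) / B.card
      - (Y.filter (· ∈ Q i)).card / T.card| ≤ τ := by
    intro i
    have := lift_color Y Y' _ (fun c => i ∈ c) _ _ _ (by positivity) hYY
    rw [cardC] at this
    simpa using this.trans hητ'
  have fsum : ∀ X Y : Finset V, ∑ x ∈ X, ∑ y ∈ Y, ((if G.Adj x y then (1:ℝ) else 0) - d) =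
      eBetween G ↑X ↑Y - d * (X.card * Y.card) := by
    intro X Y
    rw [eBetween_eq]
    simp only [Finset.sum_sub_distrib, Finset.sum_const, nsmul_eq_mul]
    ring
  set α := (X.card : ℝ) / S.card with hα
  set β := (Y.card : ℝ) / T.card with hβ
  set α' := (X'.card : ℝ) / A.card with hα'
  set β' := (Y'.card : ℝ) / B.card with hβ'
  have hα1 : Real.sqrt ε ≤ α := by rw [hα, le_div_iff₀ hS0']; exact hXc
  have hβ1 : Real.sqrt ε ≤ β := by rw [hβ, le_div_iff₀ hT0']; exact hYc
  have hα2 : ε ≤ α' := by linarith [(abs_le.mp tX).1]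
  have hβ2 : ε ≤ β' := by linarith [(abs_le.mp tY).1]
  have hX'c : ε * A.card ≤ X'.card := by rwa [hα', le_div_iff₀ hA0'] at hα2
  have hY'c : ε * B.card ≤ Y'.card := by rwa [hβ', le_div_iff₀ hB0'] at hβ2
  have conv : ∀ (X Y : Finset V) , 0 < (X.card : ℝ) → 0 < (Y.card : ℝ) →
      |(eBetween G ↑X ↑Y : ℝ) / (X.card * Y.card) - d| =
      |∑ x ∈ X, ∑ y ∈ Y, ((if G.Adj x y then (1:ℝ) else 0) - d)| / (X.card * Y.card) := by
    intro X Y hX hY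
    have : (0:ℝ) < X.card * Y.card := by positivity
    rw [fsum, ← abs_of_pos this, ← abs_div, abs_of_pos this, sub_div, mul_div_assoc,
      div_self this.ne', mul_one]
  have hX'0 : 0 < (X'.card : ℝ) := lt_of_lt_of_le (by positivity) hX'c
  have hY'0 : 0 < (Y'.card : ℝ) := lt_of_lt_of_le (by positivity) hY'c
  have hX0 : 0 < (X.card : ℝ) := lt_of_lt_of_le (by positivity) hXc
  have hY0 : 0 < (Y.card : ℝ) := lt_of_lt_of_le (by positivity) hYc
  have hr := hreg X' hX' Y' hY' hX'c hY'c
  rw [conv X' Y' hX'0 hY'0, div_lt_iff₀ (by positivity)] at hr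
  have hr2 : |∑ x ∈ X', ∑ y ∈ Y', ((if G.Adj x y then (1:ℝ) else 0) - d)| ≤
      (ε * (α' * β')) * (A.card * B.card) := by
    refine hr.le.trans (le_of_eq ?_)
    rw [hα', hβ']; field_simp
  have hfin := dev_transfer P Q s (fun x y => (if G.Adj x y then (1:ℝ) else 0) - d)
    A B S T X Y X' Y' δ ε τ _ hδ hε hS0 hT0 hS hT hX hY hX' hY' hSA hTB hs hcut tXi tYi hr2
  rw [conv X Y hX0 hY0, div_lt_iff₀ (by positivity)]
  refine hfin.trans_lt ?_
  have e1 : Real.sqrt ε * ((X.card : ℝ) * Y.card) = (Real.sqrt ε * (α * β)) * (S.card * T.card) := by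
    rw [hα, hβ]; field_simp
  rw [e1]
  apply mul_lt_mul_of_pos_right _ (by positivity)
  have r1 := ratio_bounds Y' B hY'
  have r2 := ratio_bounds X S hX
  have hm := (abs_le.mp (mul_diff _ _ _ _ τ r1.1 r1.2 r2.1 r2.2 tX tY)).2
  have hm2 : ε * (α' * β') ≤ ε * (α * β) + 2 * τ := by
    have : ε * (α' * β') ≤ ε * (α * β + 2 * τ) := by
      apply mul_le_mul_of_nonneg_left _ hε.le; linarith
    nlinarith
  have hab : ε ≤ α * β := by
    calc ε = Real.sqrt ε * Real.sqrt ε := hsq.symm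
      _ ≤ _ := by gcongr
  have : κ ≤ (Real.sqrt ε - ε) * (α * β) := by rw [hκ]; gcongr
  linarith

set_option maxHeartbeats 2000000 in
/-- Proposition 2.5: a super-regular pair can be partitioned into prescribed
sizes so that all four sub-pairs are `(ε^{1/2}, d)`-super-regular. -/
theorem super_regular_pair_partition (ε d : ℝ) (hε0 : 0 < ε) (hεd : ε ≤ d) (hd1 : d ≤ 1) :
    ∃ n₀ : ℕ, ∀ n : ℕ, n₀ ≤ n →
      ∀ (V : Type) [DecidableEq V] (G : SimpleGraph V) (A B : Finset V),
        IsBipartiteWith G A B →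
        A.card ≤ n → B.card ≤ n →
        IsSuperRegularPair G A B ε d →
        ∀ a₁ a₂ b₁ b₂ : ℕ,
          ε * n ≤ (a₁ : ℝ) → ε * n ≤ (a₂ : ℝ) → ε * n ≤ (b₁ : ℝ) → ε * n ≤ (b₂ : ℝ) →
          a₁ + a₂ = A.card → b₁ + b₂ = B.card →
          ∃ A₁ A₂ B₁ B₂ : Finset V,
            Disjoint A₁ A₂ ∧ A₁ ∪ A₂ = A ∧
            Disjoint B₁ B₂ ∧ B₁ ∪ B₂ = B ∧
            A₁.card = a₁ ∧ A₂.card = a₂ ∧ B₁.card = b₁ ∧ B₂.card = b₂ ∧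
            IsSuperRegularPair G A₁ B₁ (Real.sqrt ε) d ∧
            IsSuperRegularPair G A₁ B₂ (Real.sqrt ε) d ∧
            IsSuperRegularPair G A₂ B₁ (Real.sqrt ε) d ∧
            IsSuperRegularPair G A₂ B₂ (Real.sqrt ε) d := by
  classical
  by_cases hε1 : 1 ≤ ε
  · refine ⟨1, ?_⟩
    intro n hn V _ G A B hbip hA hB hG a₁ a₂ b₁ b₂ ha₁ ha₂ hb₁ hb₂ haA hbB
    exfalso
    have h1 : (a₁ : ℝ) + a₂ ≤ n := by exact_mod_cast haA.trans_le hA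
    have h2 : (1:ℝ) ≤ n := by exact_mod_cast hn
    nlinarith
  push Not at hε1
  have hgap : 0 < Real.sqrt ε - ε := by
    have hsq : Real.sqrt ε * Real.sqrt ε = ε := Real.mul_self_sqrt hε0.le
    have hsq0 : 0 < Real.sqrt ε := Real.sqrt_pos.mpr hε0
    have : Real.sqrt ε < 1 := by rw [Real.sqrt_lt' one_pos]; simpa using hε1
    nlinarith
  obtain ⟨κ, hκ⟩ : ∃ κ, κ = (Real.sqrt ε - ε) * ε := ⟨_, rfl⟩
  have hκ0 : 0 < κ := by rw [hκ]; positivity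
  have hκ1 : κ ≤ Real.sqrt ε - ε := by rw [hκ]; nlinarith
  obtain ⟨δ, hδ⟩ : ∃ δ, δ = κ * ε ^ 2 / 8 := ⟨_, rfl⟩
  have hδ0 : 0 < δ := by rw [hδ]; positivity
  have hδκ : δ + δ / ε ^ 2 ≤ κ / 4 := by
    have e1 : δ / ε ^ 2 = κ / 8 := by rw [hδ]; field_simp
    have e2 : δ ≤ κ / 8 := by
      rw [hδ]
      have : ε ^ 2 ≤ 1 := pow_le_one₀ hε0.le hε1.le
      nlinarith
    linarith
  obtain ⟨m, hm⟩ := exists_nat_gt (1 / δ ^ 2)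
  have hm' : 1 < m * δ ^ 2 := by rwa [div_lt_iff₀ (by positivity)] at hm
  obtain ⟨τ, hτ⟩ : ∃ τ, τ = κ / (16 * (m * δ + 1)) := ⟨_, rfl⟩
  have hτ0 : 0 < τ := by rw [hτ]; positivity
  have hτe : τ * (m * δ + 1) = κ / 16 := by rw [hτ]; field_simp
  have hτκ : m * (δ * (2 * τ)) + 2 * τ ≤ κ / 4 := by
    have : m * (δ * (2 * τ)) + 2 * τ = 2 * (τ * (m * δ + 1)) := by ring
    rw [this, hτe]; linarith
  obtain ⟨η, hη⟩ : ∃ η : ℝ, η = τ / (2 * 2 ^ m) := ⟨_, rfl⟩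
  have hη0 : 0 < η := by rw [hη]; positivity
  have hητ : 2 ^ m * (η + η) = τ := by rw [hη]; field_simp; ring
  have hηε : η ≤ Real.sqrt ε - ε := by
    have h1 : (1:ℝ) ≤ 2 ^ m := one_le_pow₀ (by norm_num)
    have h2 : 0 ≤ τ * (m * δ) := by positivity
    nlinarith
  obtain ⟨n₁, hn₁⟩ := exists_split (η * ε) (by positivity) (2 ^ m)
  obtain ⟨n₂, hn₂⟩ := exists_nat_gt (1 / (η * ε))
  refine ⟨max n₁ (max n₂ 1), ?_⟩
  intro n hn V _ G A B hbip hA hB hG a₁ a₂ b₁ b₂ ha₁ ha₂ hb₁ hb₂ haA hbB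
  have hnn₁ : n₁ ≤ n := (le_max_left _ _).trans hn
  have hnn₂ : n₂ ≤ n := ((le_max_left _ _).trans (le_max_right _ _)).trans hn
  have hnn1 : 1 ≤ n := ((le_max_right _ _).trans (le_max_right _ _)).trans hn
  have hn0 : (0:ℝ) < n := by exact_mod_cast hnn1
  have hεn : 0 < ε * n := by positivity
  have pos : ∀ a : ℕ, ε * n ≤ a → 0 < a := fun a h => by exact_mod_cast hεn.trans_le h
  have hA0 : 0 < A.card := by have := pos _ ha₁; omega
  have hB0 : 0 < B.card := by have := pos _ hb₁; omega
  have small : ∀ a : ℕ, ε * n ≤ a → 1 / (a : ℝ) ≤ η := by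
    intro a ha
    have h0 : (0:ℝ) < a := hεn.trans_le ha
    have h1 : 1 / (η * ε) < n := hn₂.trans_le (by exact_mod_cast hnn₂)
    rw [div_lt_iff₀ (by positivity)] at h1
    rw [div_le_iff₀ h0]
    nlinarith
  have hAn : ε * n ≤ A.card := ha₁.trans (by exact_mod_cast (by omega : a₁ ≤ A.card))
  have hBn : ε * n ≤ B.card := hb₁.trans (by exact_mod_cast (by omega : b₁ ≤ B.card))
  have hητA : 2 ^ m * (η + 1 / (A.card : ℝ)) ≤ τ := by
    rw [← hητ]; gcongr; exact small _ hAn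
  have hητB : 2 ^ m * (η + 1 / (B.card : ℝ)) ≤ τ := by
    rw [← hητ]; gcongr; exact small _ hBn
  obtain ⟨P, Q, s, hs, hcut⟩ := weak_reg' A B hA0 hB0
    (fun x y => (if G.Adj x y then (1:ℝ) else 0) - d) (by
      intro x _ y _
      rw [abs_le]
      split_ifs <;> constructor <;> linarith) δ hδ0 m hm'
  have split : ∀ (A B : Finset V) (P : Fin m → Finset V), A.card ≤ n → B.card ≤ n → 0 < A.card →
      ∀ a₁ a₂ : ℕ, ε * n ≤ a₁ → ε * n ≤ a₂ → a₁ + a₂ = A.card →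
      ∃ S₁ S₂ : Finset V, Disjoint S₁ S₂ ∧ S₁ ∪ S₂ = A ∧ S₁.card = a₁ ∧ S₂.card = a₂ ∧
        ∀ S, (S = S₁ ∨ S = S₂) → S ⊆ A ∧ 0 < S.card ∧ ε * A.card ≤ S.card ∧
        (∀ c : Finset (Fin m),
          |((A.filter (fun x => Finset.univ.filter (x ∈ P ·) = c) ∩ S).card : ℝ) -
          S.card / A.card * (A.filter (fun x => Finset.univ.filter (x ∈ P ·) = c)).card|
            ≤ η * S.card) ∧
        (∀ b ∈ B, |((A.filter (G.Adj b) ∩ S).card : ℝ) -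
          S.card / A.card * (A.filter (G.Adj b)).card| ≤ η * S.card) := by
    intro A B P hA hB hA0 a₁ a₂ ha₁ ha₂ haA
    have hA0' : (0:ℝ) < A.card := by exact_mod_cast hA0
    set F₁ : Finset (Finset V) := (Finset.univ : Finset (Finset (Fin m))).image
      (fun c => A.filter (fun x => Finset.univ.filter (x ∈ P ·) = c)) with hF₁
    set F₂ : Finset (Finset V) := B.image (fun b => A.filter (G.Adj b)) with hF₂
    have hF : (F₁ ∪ F₂).card ≤ n + 2 ^ m := by
      have h1 : F₁.card ≤ 2 ^ m := Finset.card_image_le.trans (by simp)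
      have h2 : F₂.card ≤ n := Finset.card_image_le.trans hB
      have := Finset.card_union_le F₁ F₂
      omega
    obtain ⟨S, hSA, hSc, hS⟩ := hn₁ n hnn₁ V A (F₁ ∪ F₂) hA hA0 hF a₁ (by omega)
    have hc2 : (A \ S).card = a₂ := by
      rw [Finset.card_sdiff_of_subset hSA]; omega
    have haR : (a₁ : ℝ) + a₂ = A.card := by exact_mod_cast haA
    have hS1 : ∀ X ∈ F₁ ∪ F₂, X ⊆ A →
        |((X ∩ S).card : ℝ) - S.card / A.card * X.card| ≤ η * S.card := by
      intro X hX hXA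
      rw [hSc]
      refine (hS X hX hXA).trans ?_
      rw [mul_assoc]
      exact mul_le_mul_of_nonneg_left (by assumption) hη0.le
    have hS2 : ∀ X ∈ F₁ ∪ F₂, X ⊆ A →
        |((X ∩ (A \ S)).card : ℝ) - (A \ S).card / A.card * X.card| ≤ η * (A \ S).card := by
      intro X hX hXA
      rw [hc2]
      have h1 : (X ∩ S).card + (X ∩ (A \ S)).card = X.card := by
        have e : X ∩ (A \ S) = X \ S := by
          ext x
          simp only [Finset.mem_inter, Finset.mem_sdiff]
          constructor
          · rintro ⟨a, b, c⟩; exact ⟨a, c⟩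
          · rintro ⟨a, c⟩; exact ⟨a, hXA a, c⟩
        rw [e]
        exact Finset.card_inter_add_card_sdiff X S
      have h1' : ((X ∩ S).card : ℝ) + (X ∩ (A \ S)).card = X.card := by exact_mod_cast h1
      have h2 : (a₂ : ℝ) / A.card = 1 - a₁ / A.card := by
        rw [← haR] at hA0' ⊢
        field_simp
        ring
      have h3 : ((X ∩ (A \ S)).card : ℝ) - a₂ / A.card * X.card =
          -(((X ∩ S).card : ℝ) - a₁ / A.card * X.card) := by
        rw [h2]; linarith
      rw [h3, abs_neg]
      refine (hS X hX hXA).trans ?_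
      rw [mul_assoc]
      exact mul_le_mul_of_nonneg_left (by assumption) hη0.le
    have hAn' : (A.card : ℝ) ≤ n := by exact_mod_cast hA
    have memF₁ : ∀ c : Finset (Fin m),
        A.filter (fun x => Finset.univ.filter (x ∈ P ·) = c) ∈ F₁ ∪ F₂ := fun c =>
      Finset.mem_union_left _ (Finset.mem_image_of_mem
        (fun c => A.filter (fun x => Finset.univ.filter (x ∈ P ·) = c)) (Finset.mem_univ c))
    have memF₂ : ∀ b ∈ B, A.filter (G.Adj b) ∈ F₁ ∪ F₂ := fun b hb =>
      Finset.mem_union_right _ (Finset.mem_image_of_mem (fun b => A.filter (G.Adj b)) hb)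
    have hεA : ε * A.card ≤ ε * n := by gcongr
    refine ⟨S, A \ S, Finset.disjoint_sdiff, Finset.union_sdiff_of_subset hSA, hSc, hc2, ?_⟩
    rintro S' (rfl | rfl)
    · exact ⟨hSA, by rw [hSc]; exact pos _ ha₁, by rw [hSc]; linarith,
        fun c => hS1 _ (memF₁ c) (Finset.filter_subset _ _),
        fun b hb => hS1 _ (memF₂ b hb) (Finset.filter_subset _ _)⟩
    · exact ⟨Finset.sdiff_subset, by rw [hc2]; exact pos _ ha₂, by rw [hc2]; linarith,
        fun c => hS2 _ (memF₁ c) (Finset.filter_subset _ _),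
        fun b hb => hS2 _ (memF₂ b hb) (Finset.filter_subset _ _)⟩
  obtain ⟨A₁, A₂, hAd, hAu, hA₁, hA₂, hAall⟩ := split A B P hA hB hA0 a₁ a₂ ha₁ ha₂ haA
  obtain ⟨B₁, B₂, hBd, hBu, hB₁, hB₂, hBall⟩ := split B A Q hB hA hB0 b₁ b₂ hb₁ hb₂ hbB
  have fin : ∀ S T, (S = A₁ ∨ S = A₂) → (T = B₁ ∨ T = B₂) →
      IsSuperRegularPair G S T (Real.sqrt ε) d := by
    intro S T hS hT
    obtain ⟨s1, s2, s3, s4, s5⟩ := hAall S hS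
    obtain ⟨t1, t2, t3, t4, t5⟩ := hBall T hT
    exact pair_lemma G P Q s A B S T δ ε d τ η κ hδ0 hε0 hε1 hη0.le hκ s2 t2 s1 t1 s3 t3 hs hcut
      hδκ hτκ hτ0.le hητA hητB hηε s4 t4 s5 t5 hG
  exact ⟨A₁, A₂, B₁, B₂, hAd, hAu, hBd, hBu, hA₁, hA₂, hB₁, hB₂,
    fin _ _ (Or.inl rfl) (Or.inl rfl), fin _ _ (Or.inl rfl) (Or.inr rfl),
    fin _ _ (Or.inr rfl) (Or.inl rfl), fin _ _ (Or.inr rfl) (Or.inr rfl)⟩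

end ApproxDecomp
end

section
/- Let 0 < 1/n ≪ η ≪ ξ ≪ 1 (that is, there exist ξ₀ > 0, for each ξ ≤ ξ₀ some η₀ > 0, and for each η ≤ η₀ some n₀, such that the following holds for all n ≥ n₀). Suppose G is an n-vertex graph with bi-independence number ᾶ(G) ≤ ηn. Then there exists a spanning subgraph H of G with ᾶ(H) ≤ 2η^{1/3}n and maximum degree Δ(H) ≤ ξn. -/
open SimpleGraph

namespace ApproxDecomp

/-- The degree of a vertex, as the cardinality of its neighbour set. -/
noncomputable def deg {V : Type*} (G : SimpleGraph V) (v : V) : ℕ :=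
  (G.neighborSet v).ncard

/-- An `(s,t)`-bipartite hole: two disjoint vertex sets of sizes `s`, `t`
with no edges between them. -/
def HasBipartiteHole {V : Type*} (G : SimpleGraph V) (s t : ℕ) : Prop :=
  ∃ S T : Finset V, Disjoint S T ∧ S.card = s ∧ T.card = t ∧
    ∀ a ∈ S, ∀ b ∈ T, ¬ G.Adj a b

/-- The bi-independence number: the largest `r` such that `G` has an
`(s,t)`-bipartite hole for every `s + t = r`. -/
noncomputable def biIndep {V : Type*} (G : SimpleGraph V) : ℕ :=
  sSup {r : ℕ | ∀ s t : ℕ, s + t = r → HasBipartiteHole G s t}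

lemma hole_mono {V : Type*} {G : SimpleGraph V} {s t s' t' : ℕ} (h : HasBipartiteHole G s t)
    (hs : s' ≤ s) (ht : t' ≤ t) : HasBipartiteHole G s' t' := by
  obtain ⟨S, T, hd, rfl, rfl, h⟩ := h
  obtain ⟨S', hS, hS'⟩ := Finset.exists_subset_card_eq hs
  obtain ⟨T', hT, hT'⟩ := Finset.exists_subset_card_eq ht
  exact ⟨S', T', Finset.disjoint_of_subset_left hS (Finset.disjoint_of_subset_right hT hd),
    hS', hT', fun a ha b hb => h a (hS ha) b (hT hb)⟩

lemma not_hole_of_biIndep_lt {n : ℕ} {G : SimpleGraph (Fin n)} {m : ℕ} (h : biIndep G < m) :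
    ¬ HasBipartiteHole G m m := by
  intro hm
  have hb : BddAbove {r : ℕ | ∀ s t : ℕ, s + t = r → HasBipartiteHole G s t} := by
    refine ⟨n, fun r hr => ?_⟩
    obtain ⟨S, T, -, hS, -, -⟩ := hr r 0 rfl
    rw [← hS]
    simpa using Finset.card_le_univ S
  have : m ≤ biIndep G := le_csSup hb (fun s t hst => hole_mono hm (by omega) (by omega))
  omega

lemma biIndep_le_of_not_hole {n : ℕ} {G : SimpleGraph (Fin n)} {k : ℕ}
    (h : ¬ HasBipartiteHole G k k) : biIndep G ≤ 2 * k := by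
  unfold biIndep
  apply csSup_le'
  intro r hr
  by_contra hlt
  exact h (hole_mono (hr k (r - k) (by omega)) le_rfl (by omega))

open Classical in
/-- The edges of `G` between `A` and `B`. -/
noncomputable def cross {n : ℕ} (G : SimpleGraph (Fin n)) (A B : Finset (Fin n)) :
    Finset (Sym2 (Fin n)) :=
  ((A ×ˢ B).filter (fun p => G.Adj p.1 p.2)).image (fun p => s(p.1, p.2))

open Classical in
lemma cross_card {n : ℕ} (G : SimpleGraph (Fin n)) (A B : Finset (Fin n)) (hd : Disjoint A B) :
    (cross G A B).card = ∑ a ∈ A, (B.filter (fun b => G.Adj a b)).card := by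
  unfold cross
  rw [Finset.card_image_of_injOn]
  · rw [Finset.card_filter, Finset.sum_product]
    simp only [Finset.card_filter]
  · rintro ⟨a, b⟩ h ⟨a', b'⟩ h' he
    simp only [Finset.coe_filter, Finset.mem_product, Set.mem_ofPred_eq] at h h'
    simp only [Sym2.eq_iff] at he
    rcases he with ⟨rfl, rfl⟩ | ⟨rfl, rfl⟩
    · rfl
    · exact absurd h'.1.2 (Finset.disjoint_left.1 hd h.1.1)

open Classical in
lemma cross_card_ge {n : ℕ} (G : SimpleGraph (Fin n)) (A B : Finset (Fin n)) (hd : Disjoint A B)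
    {m k : ℕ} (hm : ¬ HasBipartiteHole G m m) (hA : A.card = k) (hB : B.card = k)
    (hm0 : 0 < m) : (k - m) * ((k - m) / m + 1) ≤ (cross G A B).card := by
  rw [cross_card G A B hd]
  by_cases hmk : k ≤ m
  · simp [Nat.sub_eq_zero_of_le hmk]
  push Not at hmk
  set d := (k - m) / m with hdd
  set A0 := A.filter (fun a => (B.filter (fun b => G.Adj a b)).card ≤ d) with hA0
  have hlt : A0.card < m := by
    by_contra hge
    push Not at hge
    obtain ⟨S, hS, hSc⟩ := Finset.exists_subset_card_eq hge
    have hN : (S.biUnion (fun a => B.filter (fun b => G.Adj a b))).card ≤ m * d := by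
      rw [← hSc]
      apply Finset.card_biUnion_le_card_mul
      intro a ha
      exact (Finset.mem_filter.1 (hS ha)).2
    have hmd : m * d ≤ k - m := Nat.mul_div_le _ _
    have hT : m ≤ (B \ S.biUnion (fun a => B.filter (fun b => G.Adj a b))).card := by
      have := Finset.le_card_sdiff (S.biUnion (fun a => B.filter (fun b => G.Adj a b))) B
      omega
    apply hm
    refine hole_mono (s := S.card) (t := _) ⟨S, _, ?_, rfl, rfl, ?_⟩ hSc.ge hT
    · apply Finset.disjoint_of_subset_left (hS.trans (Finset.filter_subset _ _))
      exact Finset.disjoint_of_subset_right Finset.sdiff_subset hd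
    · intro a ha b hb hab
      rw [Finset.mem_sdiff] at hb
      exact hb.2 (Finset.mem_biUnion.2 ⟨a, ha, Finset.mem_filter.2 ⟨hb.1, hab⟩⟩)
  have h1 : k - m ≤ (A \ A0).card := by
    have := Finset.le_card_sdiff A0 A
    omega
  calc (k - m) * (d + 1) ≤ (A \ A0).card * (d + 1) := Nat.mul_le_mul_right _ h1
    _ ≤ ∑ a ∈ A \ A0, (B.filter (fun b => G.Adj a b)).card := by
        rw [← smul_eq_mul]
        apply Finset.card_nsmul_le_sum
        intro a ha
        simp only [hA0, Finset.mem_sdiff, Finset.mem_filter, not_and, not_le] at ha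
        exact ha.2 ha.1
    _ ≤ _ := Finset.sum_le_sum_of_subset Finset.sdiff_subset

lemma count_fun {E : Type*} [Fintype E] [DecidableEq E] {K : ℕ} (hK : 0 < K) (F : Finset E)
    (P : Finset (Fin K)) :
    ((Finset.univ.filter (fun c : E → Fin K => ∀ e ∈ F, c e ∈ P)).card : ℝ)
      = ((P.card : ℝ) / K) ^ F.card * (K : ℝ) ^ Fintype.card E := by
  have h : Finset.univ.filter (fun c : E → Fin K => ∀ e ∈ F, c e ∈ P)
      = Fintype.piFinset (fun e => if e ∈ F then P else Finset.univ) := by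
    ext c
    simp only [Finset.mem_filter, Finset.mem_univ, true_and, Fintype.mem_piFinset]
    refine forall_congr' fun e => ?_
    by_cases he : e ∈ F <;> simp [he]
  rw [h, Fintype.card_piFinset]
  have hK' : (K : ℝ) ≠ 0 := by positivity
  have h2 : ∀ e : E, (((if e ∈ F then P else Finset.univ : Finset (Fin K)).card : ℕ) : ℝ)
      = (if e ∈ F then (P.card : ℝ) / K else 1) * K := by
    intro e
    by_cases he : e ∈ F
    · simp [he, hK']
    · simp [he]
  push_cast
  rw [Finset.prod_congr rfl (fun e _ => h2 e), Finset.prod_mul_distrib, Finset.prod_const,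
    Finset.prod_ite_mem, Finset.univ_inter, Finset.prod_const, Finset.card_univ]

open Classical in
lemma exists_good {n K D k : ℕ} (hK : 0 < K) (G : SimpleGraph (Fin n)) (hn : 1 ≤ n)
    (hKD : 8 ^ n ≤ K ^ D)
    (hcross : ∀ A B : Finset (Fin n), Disjoint A B → A.card = k → B.card = k →
      3 * (n : ℝ) * K ≤ (cross G A B).card) :
    ∃ H : SimpleGraph (Fin n), H ≤ G ∧ ¬ HasBipartiteHole H k k ∧ ∀ v, deg H v < D := by
  let z : Fin K := ⟨0, hK⟩
  have hKr : (0 : ℝ) < K := by exact_mod_cast hK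
  let E := Sym2 (Fin n)
  let bad1 : Finset (E → Fin K) :=
    (Finset.univ : Finset (Fin n × Finset (Fin n))).biUnion (fun p =>
      if p.2.card = D then
        Finset.univ.filter (fun c : E → Fin K => ∀ e ∈ p.2.image (fun u => s(p.1, u)),
          c e ∈ ({z} : Finset (Fin K)))
      else ∅)
  let bad2 : Finset (E → Fin K) :=
    (Finset.univ : Finset (Finset (Fin n) × Finset (Fin n))).biUnion (fun p =>
      if Disjoint p.1 p.2 ∧ p.1.card = k ∧ p.2.card = k then
        Finset.univ.filter (fun c : E → Fin K => ∀ e ∈ cross G p.1 p.2,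
          c e ∈ ({z}ᶜ : Finset (Fin K)))
      else ∅)
  have hn2 : (n : ℝ) ≤ 2 ^ n / 1 := by
    rw [div_one]; exact_mod_cast Nat.lt_two_pow_self.le
  have hEpos : (0 : ℝ) < (K : ℝ) ^ Fintype.card E := by positivity
  have hb1 : (bad1.card : ℝ) ≤ (1 / 2 : ℝ) * (K : ℝ) ^ Fintype.card E := by
    have h1 : (bad1.card : ℝ) ≤ ∑ p : Fin n × Finset (Fin n),
        (1 / 8 : ℝ) ^ n * (K : ℝ) ^ Fintype.card E := by
      refine le_trans (Nat.cast_le.2 Finset.card_biUnion_le) ?_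
      push_cast
      apply Finset.sum_le_sum
      rintro ⟨v, T⟩ -
      dsimp only
      split_ifs with hT
      · rw [count_fun hK]
        apply mul_le_mul_of_nonneg_right _ hEpos.le
        rw [Finset.card_image_of_injective, hT, Finset.card_singleton, Nat.cast_one, div_pow,
          div_pow, one_pow, one_pow]
        · apply one_div_le_one_div_of_le (by positivity)
          exact_mod_cast hKD
        · intro a b hab
          exact Sym2.congr_right.1 hab
      · simp only [Finset.card_empty, Nat.cast_zero]; positivity
    refine h1.trans ?_
    rw [Finset.sum_const, nsmul_eq_mul, ← mul_assoc]
    apply mul_le_mul_of_nonneg_right _ hEpos.le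
    simp only [Finset.card_univ, Fintype.card_prod, Fintype.card_fin, Fintype.card_finset]
    push_cast
    calc (n : ℝ) * 2 ^ n * (1 / 8) ^ n ≤ 2 ^ n * 2 ^ n * (1 / 8) ^ n := by
          rw [div_one] at hn2; gcongr
      _ = (1 / 2) ^ n := by rw [← mul_pow, ← mul_pow]; norm_num
      _ ≤ (1 / 2) ^ 1 := pow_le_pow_of_le_one (by norm_num) (by norm_num) hn
      _ = 1 / 2 := by norm_num
  have hexp : (1 - 1 / (K : ℝ)) ≤ Real.exp (-(1 / K)) := by
    have := Real.add_one_le_exp (-(1 / (K : ℝ))); linarith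
  have hK1 : 1 / (K : ℝ) ≤ 1 := by
    rw [div_le_one hKr]; exact_mod_cast hK
  have he8 : Real.exp (-3) ≤ 1 / 16 := by
    rw [Real.exp_neg, ← one_div]
    apply one_div_le_one_div_of_le (by norm_num)
    have h := Real.exp_one_gt_d9
    have h3 : Real.exp 3 = Real.exp 1 ^ 3 := by rw [← Real.exp_nat_mul]; norm_num
    rw [h3]
    calc (16 : ℝ) ≤ 2.7 ^ 3 := by norm_num
      _ ≤ _ := by gcongr; linarith
  have hb2 : (bad2.card : ℝ) ≤ (1 / 4 : ℝ) * (K : ℝ) ^ Fintype.card E := by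
    have h1 : (bad2.card : ℝ) ≤ ∑ p : Finset (Fin n) × Finset (Fin n),
        (1 / 16 : ℝ) ^ n * (K : ℝ) ^ Fintype.card E := by
      refine le_trans (Nat.cast_le.2 Finset.card_biUnion_le) ?_
      push_cast
      apply Finset.sum_le_sum
      rintro ⟨A, B⟩ -
      dsimp only
      split_ifs with hT
      · rw [count_fun hK]
        apply mul_le_mul_of_nonneg_right _ hEpos.le
        have hc : ((({z}ᶜ : Finset (Fin K)).card : ℝ) / K) = 1 - 1 / (K : ℝ) := by
          rw [Finset.card_compl, Finset.card_singleton, Fintype.card_fin, Nat.cast_sub hK]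
          field_simp
          simp
        rw [hc]
        calc (1 - 1 / (K : ℝ)) ^ (cross G A B).card
            ≤ Real.exp (-(1 / K)) ^ (cross G A B).card :=
              pow_le_pow_left₀ (by linarith) hexp _
          _ = Real.exp ((cross G A B).card * (-(1 / K))) := by rw [Real.exp_nat_mul]
          _ ≤ Real.exp (n * (-3)) := by
              apply Real.exp_le_exp.2
              have := hcross A B hT.1 hT.2.1 hT.2.2
              have h3 : 3 * (n : ℝ) ≤ (cross G A B).card * (1 / K) := by
                rw [mul_one_div, le_div_iff₀ hKr]; exact this
              linarith
          _ = Real.exp (-3) ^ n := by rw [Real.exp_nat_mul]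
          _ ≤ _ := pow_le_pow_left₀ (Real.exp_pos _).le he8 _
      · simp only [Finset.card_empty, Nat.cast_zero]; positivity
    refine h1.trans ?_
    rw [Finset.sum_const, nsmul_eq_mul, ← mul_assoc]
    apply mul_le_mul_of_nonneg_right _ hEpos.le
    simp only [Finset.card_univ, Fintype.card_prod, Fintype.card_fin, Fintype.card_finset]
    push_cast
    calc (2 : ℝ) ^ n * 2 ^ n * (1 / 16) ^ n = (1 / 4) ^ n := by
          rw [← mul_pow, ← mul_pow]; norm_num
      _ ≤ (1 / 4) ^ 1 := pow_le_pow_of_le_one (by norm_num) (by norm_num) hn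
      _ = 1 / 4 := by norm_num
  obtain ⟨c, hc⟩ : ∃ c : E → Fin K, c ∉ bad1 ∪ bad2 := by
    by_contra hall
    push Not at hall
    have hu : bad1 ∪ bad2 = Finset.univ := Finset.eq_univ_iff_forall.2 hall
    have h1 := Finset.card_union_le bad1 bad2
    rw [hu, Finset.card_univ, Fintype.card_fun, Fintype.card_fin] at h1
    have h2 : (K : ℝ) ^ Fintype.card E ≤ bad1.card + bad2.card := by exact_mod_cast h1
    linarith
  rw [Finset.mem_union, not_or] at hc
  obtain ⟨hc1, hc2⟩ := hc
  let H : SimpleGraph (Fin n) :=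
    { Adj := fun a b => G.Adj a b ∧ c s(a, b) = z
      symm := ⟨fun a b h => ⟨h.1.symm, by rw [Sym2.eq_swap]; exact h.2⟩⟩
      loopless := ⟨fun a h => G.loopless.irrefl a h.1⟩ }
  refine ⟨H, fun a b h => h.1, ?_, ?_⟩
  · rintro ⟨A, B, hd, hA, hB, hAB⟩
    apply hc2
    refine Finset.mem_biUnion.2 ⟨(A, B), Finset.mem_univ _, ?_⟩
    rw [if_pos ⟨hd, hA, hB⟩]
    simp only [Finset.mem_filter, Finset.mem_univ, true_and]
    intro e he
    unfold cross at he
    obtain ⟨⟨a, b⟩, hp, rfl⟩ := Finset.mem_image.1 he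
    simp only [Finset.mem_filter, Finset.mem_product] at hp
    simp only [Finset.mem_compl, Finset.mem_singleton]
    exact fun hz => hAB a hp.1.1 b hp.1.2 ⟨hp.2, hz⟩
  · intro v
    by_contra hge
    push Not at hge
    unfold deg at hge
    rw [Set.ncard_eq_toFinset_card'] at hge
    obtain ⟨T, hT, hTc⟩ := Finset.exists_subset_card_eq hge
    apply hc1
    refine Finset.mem_biUnion.2 ⟨(v, T), Finset.mem_univ _, ?_⟩
    rw [if_pos hTc]
    simp only [Finset.mem_filter, Finset.mem_univ, true_and]
    intro e he
    obtain ⟨u, hu, rfl⟩ := Finset.mem_image.1 he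
    have := hT hu
    rw [Set.mem_toFinset] at this
    exact Finset.mem_singleton.2 this.2

/-- Lemma 2.8: a graph with small bi-independence number has a sparse spanning
subgraph which still has small bi-independence number. -/
theorem sparse_subgraph_small_biindependence :
    ∃ ξ₀ : ℝ, 0 < ξ₀ ∧
      ∀ ξ : ℝ, 0 < ξ → ξ ≤ ξ₀ →
      ∃ η₀ : ℝ, 0 < η₀ ∧
        ∀ η : ℝ, 0 < η → η ≤ η₀ →
        ∃ n₀ : ℕ, ∀ n : ℕ, n₀ ≤ n →
        ∀ G : SimpleGraph (Fin n),
          (biIndep G : ℝ) ≤ η * n →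
          ∃ H : SimpleGraph (Fin n), H ≤ G ∧
            (biIndep H : ℝ) ≤ 2 * η ^ ((1 : ℝ)/3) * n ∧
            ∀ v : Fin n, (deg H v : ℝ) ≤ ξ * n := by
  refine ⟨1, one_pos, fun ξ hξ hξ1 => ?_⟩
  set L := ⌈1 / ξ⌉₊ with hL
  have hLξ : 1 ≤ L * ξ := by
    have := Nat.le_ceil (1 / ξ)
    rwa [div_le_iff₀ hξ] at this
  have hL1 : 1 ≤ L := Nat.one_le_iff_ne_zero.2 (by rintro h; rw [h] at hLξ; norm_num at hLξ)
  obtain ⟨K, hKdef⟩ : ∃ K : ℕ, K = 8 ^ L := ⟨_, rfl⟩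
  have hK8 : 8 ≤ K := by rw [hKdef]; exact Nat.le_self_pow (by omega) 8
  have hK8r : (8 : ℝ) ≤ K := by exact_mod_cast hK8
  have hKpos : (0 : ℝ) < K := by linarith
  refine ⟨(1 / (96 * K)) ^ 3, by positivity, fun η hη hη0 => ?_⟩
  obtain ⟨β, hβdef⟩ : ∃ β : ℝ, β = η ^ ((1 : ℝ) / 3) := ⟨_, rfl⟩
  have hβ : 0 < β := by rw [hβdef]; positivity
  have hβ3 : β ^ 3 = η := by
    rw [hβdef, ← Real.rpow_natCast, ← Real.rpow_mul hη.le]; norm_num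
  have hβK : β ≤ 1 / (96 * K) := by
    rw [← hβ3] at hη0
    exact le_of_pow_le_pow_left₀ (by norm_num) (by positivity) hη0
  have hβK' : 96 * K * β ≤ 1 := by
    rw [le_div_iff₀ (by positivity)] at hβK; linarith
  have hβs : β ≤ 1 / 8 := by nlinarith
  refine ⟨⌈2 / η⌉₊, fun n hn G hG => ?_⟩
  have hηn : 2 ≤ η * n := by
    have := (Nat.le_ceil (2 / η)).trans (Nat.cast_le.2 hn)
    rw [div_le_iff₀ hη] at this; linarith
  have hn0 : (0 : ℝ) < n := by
    by_contra h; push Not at h; nlinarith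
  have hn1 : 1 ≤ n := by exact_mod_cast hn0
  have hβ2 : β ^ 2 ≤ 1 / 64 := by nlinarith
  have hηβ : η ≤ β / 64 := by rw [← hβ3]; nlinarith
  have hηβn : η * n ≤ β * n / 64 := by nlinarith
  set m := ⌊η * n⌋₊ + 1 with hm
  set k := ⌊β * n⌋₊ with hk
  have hmr : (m : ℝ) ≤ 2 * (η * n) := by
    have := Nat.floor_le (show 0 ≤ η * n by positivity)
    rw [hm]; push_cast; linarith
  have hkr : (k : ℝ) ≤ β * n := Nat.floor_le (by positivity)
  have hkr2 : β * n / 2 ≤ k := by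
    have := Nat.lt_floor_add_one (β * n)
    linarith
  have hm2 : (m : ℝ) ≤ k / 2 := by linarith
  have hmk : m ≤ k := by
    have : (m : ℝ) ≤ k := by
      have : (0 : ℝ) ≤ k := by positivity
      linarith
    exact_mod_cast this
  have hmpos : (0 : ℝ) < m := by rw [hm]; positivity
  have hmh : ¬ HasBipartiteHole G m m := by
    apply not_hole_of_biIndep_lt
    rw [hm, Nat.lt_succ_iff]
    exact Nat.le_floor hG
  have hKD : 8 ^ n ≤ K ^ (⌊ξ * n⌋₊ + 1) := by
    rw [hKdef, ← pow_mul]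
    apply Nat.pow_le_pow_right (by norm_num)
    have h1 := (Nat.lt_floor_add_one (ξ * n)).le
    have : (n : ℝ) ≤ L * ((⌊ξ * n⌋₊ : ℝ) + 1) := by
      calc (n : ℝ) ≤ (L * ξ) * n := by nlinarith
        _ = L * (ξ * n) := by ring
        _ ≤ _ := by gcongr
    exact_mod_cast this
  obtain ⟨H, hHG, hHh, hHd⟩ := exists_good (n := n) (K := K) (D := ⌊ξ * n⌋₊ + 1) (k := k)
    (by omega) G hn1 hKD (by
      intro A B hd hA hB
      have h1 := cross_card_ge G A B hd hmh hA hB (by omega)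
      have h2 : ((k : ℝ) - m) * (((k - m) / m : ℕ) + 1) ≤ (cross G A B).card := by
        rw [← Nat.cast_sub hmk]; exact_mod_cast h1
      have h3 : ((k : ℝ) - m) / m ≤ (((k - m) / m : ℕ) : ℝ) + 1 := by
        rw [div_le_iff₀ hmpos, ← Nat.cast_sub hmk]
        have := (Nat.lt_div_mul_add (a := k - m) (b := m) (by omega)).le
        have h4 : ((k - m : ℕ) : ℝ) ≤ (((k - m) / m * m + m : ℕ) : ℝ) := by exact_mod_cast this
        push_cast at h4
        push_cast
        linarith
      have h5 : β * n / 4 ≤ (k : ℝ) - m := by linarith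
      have hβn : 0 ≤ β * n / 4 := by positivity
      have h6 : 3 * (n : ℝ) * K * m ≤ ((k : ℝ) - m) * ((k : ℝ) - m) := by
        calc 3 * (n : ℝ) * K * m ≤ 3 * (n : ℝ) * K * (2 * (η * n)) := by gcongr
          _ = (96 * K * β) * (β ^ 2 * n ^ 2 / 16) := by rw [← hβ3]; ring
          _ ≤ 1 * (β ^ 2 * n ^ 2 / 16) := by gcongr
          _ = (β * n / 4) * (β * n / 4) := by ring
          _ ≤ _ := mul_le_mul h5 h5 hβn (hβn.trans h5)
      calc 3 * (n : ℝ) * K ≤ ((k : ℝ) - m) * (((k : ℝ) - m) / m) := by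
            rw [← mul_div_assoc, le_div_iff₀ hmpos]; exact h6
        _ ≤ ((k : ℝ) - m) * (((k - m) / m : ℕ) + 1) :=
            mul_le_mul_of_nonneg_left h3 (hβn.trans h5)
        _ ≤ _ := h2)
  refine ⟨H, hHG, ?_, fun v => ?_⟩
  · rw [← hβdef]
    have : (biIndep H : ℝ) ≤ 2 * k := by exact_mod_cast biIndep_le_of_not_hole hHh
    linarith
  · have h1 := Nat.lt_succ_iff.1 (hHd v)
    exact (Nat.cast_le.2 h1).trans (Nat.floor_le (by positivity))

end ApproxDecomp
end
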